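/- arXiv:2501.17488 — 3 statements merged into one kernel-verified Lean document; each statement's English description precedes it below -/
import Mathlib

section
/- Under the LEN setup, assume F is monotone, F' is L-Lipschitz, M ≥ 4mL, and there exists z* ∈ E with F(z*) = 0; set R := ‖z_0 − z*‖. Then for every integer T ≥ 1, the averaged output z_out := (Σ_{t=0}^{T−1} η_t z_{t+1/2}) / (Σ_{t=0}^{T−1} η_t) satisfies the restricted gap bound: for every z ∈ E with ‖z − z*‖ ≤ 3R, ⟨F(z), z_out − z⟩ ≤ 16·M·R³ / T^{3/2}. -/
open scoped RealInnerProductSpace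

lemma len_aux_taylor {E : Type*} [NormedAddCommGroup E] [InnerProductSpace ℝ E]
    (F : E → E) (F' : E → E →L[ℝ] E) (L : ℝ) (hL : 0 ≤ L)
    (hdiff : ∀ x : E, HasFDerivAt F (F' x) x)
    (hLip : ∀ x y : E, ‖F' x - F' y‖ ≤ L * ‖x - y‖) (x y : E) :
    ‖F y - F x - F' x (y - x)‖ ≤ L * ‖y - x‖ * ‖y - x‖ := by
  refine (convex_segment x y).norm_image_sub_le_of_norm_hasFDerivWithin_le' (f' := F')
    (fun u _ => (hdiff u).hasFDerivWithinAt) (fun u hu => ?_)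
    (left_mem_segment ℝ x y) (right_mem_segment ℝ x y)
  refine (hLip u x).trans (mul_le_mul_of_nonneg_left ?_ hL)
  obtain ⟨θ, hθ, rfl⟩ := (segment_eq_image' ℝ x y ▸ hu)
  simp only [add_sub_cancel_left, norm_smul, Real.norm_eq_abs, abs_of_nonneg hθ.1]
  exact mul_le_of_le_one_left (norm_nonneg _) hθ.2

lemma len_aux_swap (a : ℕ → ℝ) (ha : ∀ i, 0 ≤ a i) (m : ℕ) (hm : 1 ≤ m) (T : ℕ) :
    ∑ t ∈ Finset.range T, ∑ i ∈ Finset.Ico (m * (t / m)) t, a i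
      ≤ m * ∑ i ∈ Finset.range T, a i := by
  have h1 : ∀ t ∈ Finset.range T, ∑ i ∈ Finset.Ico (m * (t / m)) t, a i
      ≤ ∑ i ∈ Finset.range T, if i < t ∧ t < i + m then a i else 0 := by
    intro t ht
    rw [← Finset.sum_filter]
    refine Finset.sum_le_sum_of_subset_of_nonneg ?_ (fun i _ _ => ha i)
    intro i hi
    have h2 := Nat.div_add_mod t m
    have h3 := Nat.mod_lt t hm
    simp only [Finset.mem_Ico, Finset.mem_filter, Finset.mem_range] at *
    omega
  refine (Finset.sum_le_sum h1).trans ?_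
  rw [Finset.sum_comm, Finset.mul_sum]
  refine Finset.sum_le_sum fun i _ => ?_
  rw [← Finset.sum_filter, Finset.sum_const, nsmul_eq_mul]
  refine mul_le_mul_of_nonneg_right ?_ (ha i)
  have : ((Finset.range T).filter fun t => i < t ∧ t < i + m) ⊆ Finset.Ico i (i + m) := by
    intro t ht
    simp only [Finset.mem_Ico, Finset.mem_filter, Finset.mem_range] at *
    omega
  have := Finset.card_le_card this
  rw [Nat.card_Ico] at this
  exact_mod_cast (this.trans (by omega))

lemma len_aux_drift {E : Type*} [NormedAddCommGroup E] (z : ℕ → E) (m : ℕ) (hm : 1 ≤ m)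
    (t : ℕ) :
    ‖z t - z (m * (t / m))‖ ^ 2
      ≤ m * ∑ i ∈ Finset.Ico (m * (t / m)) t, ‖z (i + 1) - z i‖ ^ 2 := by
  have h2 := Nat.div_add_mod t m
  have h3 := Nat.mod_lt t hm
  have hle : m * (t / m) ≤ t := by omega
  rw [← Finset.sum_Ico_sub z hle]
  have h4 : ‖∑ i ∈ Finset.Ico (m * (t / m)) t, (z (i + 1) - z i)‖ ^ 2
      ≤ (∑ i ∈ Finset.Ico (m * (t / m)) t, ‖z (i + 1) - z i‖) ^ 2 :=
    pow_le_pow_left₀ (norm_nonneg _) (norm_sum_le _ _) 2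
  refine h4.trans (sq_sum_le_card_mul_sum_sq.trans ?_)
  refine mul_le_mul_of_nonneg_right ?_ (Finset.sum_nonneg fun i _ => sq_nonneg _)
  rw [Nat.card_Ico]
  exact_mod_cast (by omega)

/-- Theorem 1 (restricted gap bound for LEN): under the LEN setup with monotone `F`,
`L`-Lipschitz `F'`, `M ≥ 4 m L`, and a root `z*` of `F`, the averaged output satisfies
`⟨F(z), z_out − z⟩ ≤ 16 M R³ / T^{3/2}` for every `z` in the ball of radius `3R`
around `z*`. -/
theorem len_restricted_gap_bound
    {E : Type*} [NormedAddCommGroup E] [InnerProductSpace ℝ E] [FiniteDimensional ℝ E]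
    (F : E → E) (F' : E → E →L[ℝ] E) (L M : ℝ) (m : ℕ) (hm : 1 ≤ m)
    (hdiff : ∀ x : E, HasFDerivAt F (F' x) x)
    (hLip : ∀ x y : E, ‖F' x - F' y‖ ≤ L * ‖x - y‖)
    (hmono : ∀ x y : E, 0 ≤ ⟪F x - F y, x - y⟫)
    (hMpos : 0 < M) (hM : 4 * (m : ℝ) * L ≤ M)
    (z w : ℕ → E) (η : ℕ → ℝ)
    (hne : ∀ t, w t ≠ z t)
    (hnewton : ∀ t, F (z t) + F' (z (m * (t / m))) (w t - z t)
        + (M * ‖w t - z t‖) • (w t - z t) = 0)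
    (hη : ∀ t, η t = 1 / (M * ‖z t - w t‖))
    (hupdate : ∀ t, z (t + 1) = z t - η t • F (w t))
    (zstar : E) (hstar : F zstar = 0)
    (R : ℝ) (hR : R = ‖z 0 - zstar‖)
    (T : ℕ) (hT : 1 ≤ T)
    (zout : E)
    (hzout : zout = (∑ t ∈ Finset.range T, η t)⁻¹ • ∑ t ∈ Finset.range T, η t • w t) :
    ∀ zz : E, ‖zz - zstar‖ ≤ 3 * R →
      ⟪F zz, zout - zz⟫ ≤ 16 * M * R ^ 3 / (T : ℝ) ^ ((3 : ℝ) / 2) := by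
  intro zz hzz
  -- basic positivity
  have hr : ∀ t, 0 < ‖w t - z t‖ := fun t => norm_pos_iff.2 (sub_ne_zero.2 (hne t))
  have hL : 0 ≤ L := by
    have h := (norm_nonneg _).trans (hLip (w 0) (z 0))
    exact nonneg_of_mul_nonneg_left h (hr 0)
  have hηr : ∀ t, η t * (M * ‖w t - z t‖) = 1 := by
    intro t
    rw [hη t, norm_sub_rev (z t)]
    have := hr t
    field_simp
  have hηpos : ∀ t, 0 < η t := by
    intro t
    rw [hη t, norm_sub_rev (z t)]
    have := hr t
    positivity
  have hmR : (1 : ℝ) ≤ m := by exact_mod_cast hm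
  have hR0 : 0 ≤ R := hR ▸ norm_nonneg _
  rcases hR0.eq_or_lt with hR0 | hRpos
  · have : zz = zstar := by
      rw [← hR0, mul_zero] at hzz
      exact sub_eq_zero.1 (norm_le_zero_iff.1 hzz)
    rw [this, hstar, inner_zero_left, ← hR0]
    simp
  -- one step error
  have herr : ∀ t, 4 * m * ‖w t - z (t + 1)‖ ≤
      ‖w t - z t‖ + ‖z t - z (m * (t / m))‖ := by
    intro t
    set d := w t - z t with hd
    set s := ‖z t - z (m * (t / m))‖ with hs
    have e1 : w t - z (t + 1) = η t • ((F (w t) - F (z t) - F' (z t) d)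
        + (F' (z t) - F' (z (m * (t / m)))) d) := by
      have hN := hnewton t
      rw [← hd] at hN
      have hN' : F (z t) = - F' (z (m * (t / m))) d - (M * ‖d‖) • d := by
        rw [← sub_eq_zero, ← hN]; abel
      have : (F (w t) - F (z t) - F' (z t) d) + (F' (z t) - F' (z (m * (t / m)))) d
          = F (w t) + (M * ‖d‖) • d := by
        rw [hN', sub_apply]; abel
      rw [this, smul_add, smul_smul, hηr t, one_smul, hupdate t, hd]; abel
    have e2 : ‖w t - z (t + 1)‖ ≤ η t * (L * ‖d‖ * ‖d‖ + L * s * ‖d‖) := by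
      rw [e1, norm_smul, Real.norm_eq_abs, abs_of_pos (hηpos t)]
      refine mul_le_mul_of_nonneg_left ((norm_add_le _ _).trans (add_le_add ?_ ?_)) (hηpos t).le
      · exact len_aux_taylor F F' L hL hdiff hLip _ _
      · exact (ContinuousLinearMap.le_opNorm _ _).trans
          (mul_le_mul_of_nonneg_right (hLip _ _) (norm_nonneg _))
    calc 4 * m * ‖w t - z (t + 1)‖ ≤ 4 * m * (η t * (L * ‖d‖ * ‖d‖ + L * s * ‖d‖)) := by gcongr
      _ = (4 * m * L) * (η t * ‖d‖ * (‖d‖ + s)) := by ring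
      _ ≤ M * (η t * ‖d‖ * (‖d‖ + s)) := by
        refine mul_le_mul_of_nonneg_right hM ?_
        have := (hηpos t).le
        positivity
      _ = (η t * (M * ‖d‖)) * (‖d‖ + s) := by ring
      _ = ‖d‖ + s := by rw [hηr t, one_mul]
  set S2 := ∑ t ∈ Finset.range T, ‖w t - z t‖ ^ 2 with hS2
  set Se := ∑ t ∈ Finset.range T, ‖w t - z (t + 1)‖ ^ 2 with hSe
  have hS2nn : 0 ≤ S2 := Finset.sum_nonneg fun _ _ => sq_nonneg _
  set Sa := ∑ t ∈ Finset.range T, ‖z (t + 1) - z t‖ ^ 2 with hSa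
  set Ss := ∑ t ∈ Finset.range T, ‖z t - z (m * (t / m))‖ ^ 2 with hSs
  have hSsa : Ss ≤ m ^ 2 * Sa := by
    calc Ss ≤ ∑ t ∈ Finset.range T, (m : ℝ) * ∑ i ∈ Finset.Ico (m * (t / m)) t,
            ‖z (i + 1) - z i‖ ^ 2 := Finset.sum_le_sum fun t _ => len_aux_drift z m hm t
      _ = m * ∑ t ∈ Finset.range T, ∑ i ∈ Finset.Ico (m * (t / m)) t,
            ‖z (i + 1) - z i‖ ^ 2 := by rw [Finset.mul_sum]
      _ ≤ m * (m * Sa) := by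
        refine mul_le_mul_of_nonneg_left ?_ (by positivity)
        exact len_aux_swap (fun i => ‖z (i + 1) - z i‖ ^ 2) (fun _ => sq_nonneg _) m hm T
      _ = m ^ 2 * Sa := by ring
  have hSa2 : Sa ≤ 2 * S2 + 2 * Se := by
    rw [hS2, hSe, Finset.mul_sum, Finset.mul_sum, ← Finset.sum_add_distrib]
    refine Finset.sum_le_sum fun t _ => ?_
    have h1 : ‖z (t + 1) - z t‖ ≤ ‖w t - z t‖ + ‖w t - z (t + 1)‖ := by
      have : z (t + 1) - z t = (w t - z t) - (w t - z (t + 1)) := by abel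
      rw [this]; exact norm_sub_le _ _
    have h2 := pow_le_pow_left₀ (norm_nonneg _) h1 2
    nlinarith [sq_nonneg (‖w t - z t‖ - ‖w t - z (t + 1)‖)]
  have hSe2 : 16 * m ^ 2 * Se ≤ 2 * S2 + 2 * Ss := by
    rw [hS2, hSe, hSs, Finset.mul_sum, Finset.mul_sum, Finset.mul_sum, ← Finset.sum_add_distrib]
    refine Finset.sum_le_sum fun t _ => ?_
    have h2 := pow_le_pow_left₀ (by positivity) (herr t) 2
    nlinarith [sq_nonneg (‖w t - z t‖ - ‖z t - z (m * (t / m))‖)]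
  have hSe3 : Se ≤ S2 / 2 := by
    have h1 : (16 * m ^ 2) * Se ≤ (m : ℝ) ^ 2 * (2 * S2 + 2 * Sa) := by
      have : S2 ≤ m ^ 2 * S2 := le_mul_of_one_le_left hS2nn (one_le_pow₀ hmR)
      linarith
    have h2 : 16 * Se ≤ 2 * S2 + 2 * Sa := by
      refine le_of_mul_le_mul_left (a := (m : ℝ) ^ 2) ?_ (by positivity)
      linarith
    linarith
  -- telescoping
  have htel : ∀ u : E, 2 * ∑ t ∈ Finset.range T, η t * ⟪F (w t), w t - u⟫
      ≤ ‖z 0 - u‖ ^ 2 - S2 / 2 := by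
    intro u
    have h1 : ∀ t, 2 * (η t * ⟪F (w t), w t - u⟫) = (‖z t - u‖ ^ 2 - ‖z (t + 1) - u‖ ^ 2)
        + ‖w t - z (t + 1)‖ ^ 2 - ‖w t - z t‖ ^ 2 := by
      intro t
      have h2 : η t * ⟪F (w t), w t - u⟫ = ⟪z t - z (t + 1), w t - u⟫ := by
        rw [hupdate t, sub_sub_cancel, real_inner_smul_left]
      rw [h2]
      simp only [← real_inner_self_eq_norm_sq, inner_sub_left, inner_sub_right]
      rw [real_inner_comm (w t) (z t), real_inner_comm (w t) (z (t + 1)),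
        real_inner_comm u (z t), real_inner_comm u (z (t + 1))]
      ring
    rw [Finset.mul_sum, Finset.sum_congr rfl fun t _ => h1 t, Finset.sum_sub_distrib,
      Finset.sum_add_distrib, Finset.sum_range_sub' (fun t => ‖z t - u‖ ^ 2)]
    have := sq_nonneg ‖z T - u‖
    linarith
  have hmonoSum : ∀ u : E, ∑ t ∈ Finset.range T, η t * ⟪F u, w t - u⟫
      ≤ ∑ t ∈ Finset.range T, η t * ⟪F (w t), w t - u⟫ := by
    intro u
    refine Finset.sum_le_sum fun t _ => mul_le_mul_of_nonneg_left ?_ (hηpos t).le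
    have := hmono (w t) u
    rw [inner_sub_left] at this
    linarith
  have hS2R : S2 ≤ 2 * R ^ 2 := by
    have h1 := htel zstar
    have h2 := hmonoSum zstar
    simp only [hstar, inner_zero_left, mul_zero, Finset.sum_const_zero] at h2
    rw [← hR] at h1
    linarith
  -- lower bound for the sum of stepsizes
  have hTpos : (0 : ℝ) < T := by exact_mod_cast hT
  set q := Real.sqrt T with hq
  have hqpos : 0 < q := Real.sqrt_pos.2 hTpos
  have hqq : q ^ 2 = T := Real.sq_sqrt hTpos.le
  have hT32 : (T : ℝ) ^ ((3 : ℝ) / 2) = q ^ 3 := by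
    rw [hq, Real.sqrt_eq_rpow, ← Real.rpow_natCast, ← Real.rpow_mul hTpos.le]
    norm_num
  have hηlow : ∀ t, (3 * q / (4 * R) - ‖w t - z t‖ ^ 2 * q ^ 3 / (16 * R ^ 3)) / M ≤ η t := by
    intro t
    have h0 := hr t
    rw [hη t, norm_sub_rev (z t)]
    set r := ‖w t - z t‖
    rw [div_le_div_iff₀ hMpos (by positivity)]
    have : (3 * q / (4 * R) - r ^ 2 * q ^ 3 / (16 * R ^ 3)) * r ≤ 1 := by
      have h3 : 1 - (3 * q / (4 * R) - r ^ 2 * q ^ 3 / (16 * R ^ 3)) * r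
          = (r * q - 2 * R) ^ 2 * (r * q + 4 * R) / (16 * R ^ 3) := by
        field_simp
        ring
      have h4 : 0 ≤ (r * q - 2 * R) ^ 2 * (r * q + 4 * R) / (16 * R ^ 3) := by positivity
      linarith
    nlinarith
  set H := ∑ t ∈ Finset.range T, η t with hH
  have hHlow : q ^ 3 / (2 * R * M) ≤ H := by
    have h1 : ∑ t ∈ Finset.range T,
        (3 * q / (4 * R) - ‖w t - z t‖ ^ 2 * q ^ 3 / (16 * R ^ 3)) / M ≤ H :=
      Finset.sum_le_sum fun t _ => hηlow t
    rw [← Finset.sum_div, Finset.sum_sub_distrib, Finset.sum_const, Finset.card_range,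
      nsmul_eq_mul, ← Finset.sum_div, ← Finset.sum_mul, ← hS2, ← hqq] at h1
    refine le_trans ?_ h1
    have h2 : S2 * q ^ 3 / (16 * R ^ 3) ≤ (2 * R ^ 2) * q ^ 3 / (16 * R ^ 3) := by gcongr
    have h3 : q ^ 3 / (2 * R * M) ≤
        (q ^ 2 * (3 * q / (4 * R)) - (2 * R ^ 2) * q ^ 3 / (16 * R ^ 3)) / M := by
      have h4 : (q ^ 2 * (3 * q / (4 * R)) - (2 * R ^ 2) * q ^ 3 / (16 * R ^ 3)) / M
          - q ^ 3 / (2 * R * M) = q ^ 3 / (8 * R * M) := by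
        field_simp
        ring
      have h5 : 0 ≤ q ^ 3 / (8 * R * M) := by positivity
      linarith
    refine h3.trans ?_
    gcongr
  have hHpos : 0 < H := lt_of_lt_of_le (by positivity) hHlow
  -- conclusion
  have hgap : H * ⟪F zz, zout - zz⟫ ≤ 8 * R ^ 2 := by
    have h1 : H * ⟪F zz, zout - zz⟫ = ∑ t ∈ Finset.range T, η t * ⟪F zz, w t - zz⟫ := by
      simp only [inner_sub_right, mul_sub, Finset.sum_sub_distrib, ← Finset.sum_mul]
      rw [hzout, real_inner_smul_right, inner_sum]
      simp only [real_inner_smul_right]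
      rw [← mul_assoc, mul_inv_cancel₀ hHpos.ne', one_mul]
    have h2 : ‖z 0 - zz‖ ≤ 4 * R := by
      have : z 0 - zz = (z 0 - zstar) - (zz - zstar) := by abel
      rw [this]
      refine (norm_sub_le _ _).trans ?_
      rw [← hR]; linarith
    have h3 := pow_le_pow_left₀ (norm_nonneg _) h2 2
    have h4 := htel zz
    have h5 := hmonoSum zz
    rw [h1]
    nlinarith
  rw [hT32]
  calc ⟪F zz, zout - zz⟫ ≤ 8 * R ^ 2 / H := by
        rw [le_div_iff₀ hHpos]; linarith
    _ ≤ 8 * R ^ 2 / (q ^ 3 / (2 * R * M)) := by gcongr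
    _ = 16 * M * R ^ 3 / q ^ 3 := by
      field_simp
      ring
end

section
/- Let f : E → ℝ be convex and differentiable, fix z̄ ∈ E and γ > 0, let g(w) := f(w) + (γ/3)‖w − z̄‖³ with gradient ∇g, and let ẑ be a global minimizer of g (equivalently ∇g(ẑ) = 0). Then for every z ∈ E: ‖∇g(z)‖ ≥ (γ/2)‖z − ẑ‖². -/
open scoped RealInnerProductSpace

lemma aux_convex_grad {E : Type*} [NormedAddCommGroup E] [InnerProductSpace ℝ E]
    [CompleteSpace E] (f : E → ℝ) (hconv : ConvexOn ℝ Set.univ f)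
    (v x y : E) (h : HasGradientAt f v x) : inner ℝ v (y - x) ≤ f y - f x := by
  have hc : ConvexOn ℝ Set.univ (fun t : ℝ => f (AffineMap.lineMap x y t)) := by
    have h := hconv.comp_affineMap (AffineMap.lineMap x y : ℝ →ᵃ[ℝ] E)
    rw [Set.preimage_univ] at h
    exact h
  have hd : HasDerivAt (fun t : ℝ => f (AffineMap.lineMap x y t)) (inner ℝ v (y - x)) 0 := by
    have h1 : HasFDerivAt f (InnerProductSpace.toDual ℝ E v)
        (AffineMap.lineMap x y (0 : ℝ)) := by
      simpa using h.hasFDerivAt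
    have h2 := h1.comp_hasDerivAt (0 : ℝ) (AffineMap.hasDerivAt_lineMap (a := x) (b := y))
    rw [InnerProductSpace.toDual_apply_apply] at h2
    exact h2
  have := hc.le_slope_of_hasDerivAt (Set.mem_univ 0) (Set.mem_univ 1) zero_lt_one hd
  simpa [slope_def_field] using this

lemma aux_cube {E : Type*} [NormedAddCommGroup E] [InnerProductSpace ℝ E] (a b : E) :
    1 / 2 * ‖a - b‖ ^ 3 ≤ inner ℝ (‖a‖ • a - ‖b‖ • b) (a - b) := by
  have h1 : inner ℝ (‖a‖ • a - ‖b‖ • b) (a - b)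
      = ‖a‖ ^ 3 + ‖b‖ ^ 3 - (‖a‖ + ‖b‖) * inner ℝ a b := by
    simp only [inner_sub_left, inner_sub_right, real_inner_smul_left,
      real_inner_self_eq_norm_sq, real_inner_comm a b]
    ring
  have h2 := norm_sub_sq_real a b
  have h3 := norm_sub_le a b
  have h4 : 0 ≤ (‖a‖ + ‖b‖ - ‖a - b‖) * ‖a - b‖ ^ 2 :=
    mul_nonneg (by linarith) (by positivity)
  have h5 : 0 ≤ (‖a‖ + ‖b‖) * (‖a‖ - ‖b‖) ^ 2 := by positivity
  have h6 : (‖a‖ + ‖b‖) * ‖a - b‖ ^ 2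
      = (‖a‖ + ‖b‖) * (‖a‖ ^ 2 - 2 * inner ℝ a b + ‖b‖ ^ 2) := by rw [h2]
  rw [h1]
  nlinarith

lemma aux_grad {E : Type*} [NormedAddCommGroup E] [InnerProductSpace ℝ E]
    [CompleteSpace E] (f g : E → ℝ) (zbar : E) (γ : ℝ)
    (hg : ∀ x : E, g x = f x + γ / 3 * ‖x - zbar‖ ^ 3) (x v w : E)
    (hf : HasGradientAt f v x) (hw : HasGradientAt g w x) :
    w = v + γ • (‖x - zbar‖ • (x - zbar)) := by
  apply hw.unique
  rw [hasGradientAt_iff_hasFDerivAt] at hf ⊢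
  have h1 := hasFDerivAt_norm_rpow (x - zbar) (p := 3) (by norm_num)
  have h2 := h1.comp x ((hasFDerivAt_id x).sub_const zbar)
  have h3 := hf.add (h2.const_mul (γ / 3))
  have e : g = f + fun y => γ / 3 * ((fun x : E => ‖x‖ ^ (3 : ℝ)) ∘ fun x => id x - zbar) y := by
    funext y
    have : ‖y - zbar‖ ^ (3 : ℝ) = ‖y - zbar‖ ^ 3 := by
      exact_mod_cast Real.rpow_natCast ‖y - zbar‖ 3
    simp [hg, this]
  rw [e]
  refine h3.congr_fderiv ?_
  ext y
  have : (3 : ℝ) - 2 = 1 := by norm_num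
  simp [this, inner_add_left, real_inner_smul_left]
  ring

/-- Gradient-dominance-type bound for the cubic-regularized function: if `ẑ` is a
global minimizer of `g(w) = f(w) + (γ/3)‖w − z̄‖³` then
`‖∇g(z)‖ ≥ (γ/2)‖z − ẑ‖²` for every `z`. -/
theorem cubic_regularized_grad_lower_bound
    {E : Type*} [NormedAddCommGroup E] [InnerProductSpace ℝ E] [FiniteDimensional ℝ E]
    (f : E → ℝ) (hconv : ConvexOn ℝ Set.univ f)
    (f' : E → E) (hgrad : ∀ x : E, HasGradientAt f (f' x) x)
    (zbar : E) (γ : ℝ) (hγ : 0 < γ)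
    (g : E → ℝ) (hg : ∀ x : E, g x = f x + γ / 3 * ‖x - zbar‖ ^ 3)
    (g' : E → E) (hg' : ∀ x : E, HasGradientAt g (g' x) x)
    (zhat : E) (hmin : ∀ x : E, g zhat ≤ g x) :
    ∀ z : E, γ / 2 * ‖z - zhat‖ ^ 2 ≤ ‖g' z‖ := by
  intro z
  have h0 : g' zhat = 0 := by
    have hl : IsLocalMin g zhat := Filter.Eventually.of_forall hmin
    have := hl.hasFDerivAt_eq_zero (hg' zhat).hasFDerivAt
    simpa using this
  have e1 := aux_grad f g zbar γ hg z _ _ (hgrad z) (hg' z)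
  have e2 := aux_grad f g zbar γ hg zhat _ _ (hgrad zhat) (hg' zhat)
  have c1 := aux_convex_grad f hconv _ z zhat (hgrad z)
  have c2 := aux_convex_grad f hconv _ zhat z (hgrad zhat)
  have c3 := aux_cube (z - zbar) (zhat - zbar)
  rw [sub_sub_sub_cancel_right] at c3
  have hc : inner ℝ (f' z) (zhat - z) = - inner ℝ (f' z) (z - zhat) := by
    rw [← inner_neg_right, neg_sub]
  have key : inner ℝ (g' z) (z - zhat) = inner ℝ (f' z) (z - zhat)
      - inner ℝ (f' zhat) (z - zhat)
      + γ * inner ℝ (‖z - zbar‖ • (z - zbar) - ‖zhat - zbar‖ • (zhat - zbar)) (z - zhat) := by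
    rw [← sub_zero (g' z), ← h0, e1, e2, ← real_inner_smul_left, ← inner_sub_left,
      ← inner_add_left, smul_sub γ]
    congr 1
    abel
  have c4 := mul_le_mul_of_nonneg_left c3 hγ.le
  have c5 := real_inner_le_norm (g' z) (z - zhat)
  rcases (norm_nonneg (z - zhat)).eq_or_lt with h | h
  · rw [← h]; simp
  · refine le_of_mul_le_mul_right ?_ h
    nlinarith
end

section
/- Under the LEN setup, assume F is μ-strongly monotone for some μ > 0, F' is L-Lipschitz, M ≥ 4mL, and z* ∈ E satisfies F(z*) = 0. Then for every integer T ≥ 1, the averaged output z_out := (Σ_{t=0}^{T−1} η_t z_{t+1/2}) / (Σ_{t=0}^{T−1} η_t) satisfies μ·‖z_out − z*‖² ≤ M·‖z_0 − z*‖³ / T^{3/2}. -/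
open scoped RealInnerProductSpace

lemma len_block_sum (m : ℕ) (hm : 1 ≤ m) (r e s : ℕ → ℝ) (hr : ∀ t, 0 ≤ r t)
    (he : ∀ t, 0 ≤ e t) (hs : ∀ t, 0 ≤ s t) (h0 : ∀ t, t % m = 0 → s t = 0)
    (hstep : ∀ t, (t + 1) % m ≠ 0 → s (t + 1) ≤ s t + r t + e t)
    (hes : ∀ t, 4 * (m : ℝ) * e t ≤ r t + s t) (T : ℕ) :
    ∑ t ∈ Finset.range T, e t ^ 2 ≤ 3 / 4 * ∑ t ∈ Finset.range T, r t ^ 2 := by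
  have hm1 : (1 : ℝ) ≤ m := by exact_mod_cast hm
  have hm0 : (0 : ℝ) < m := by linarith
  have key : ∀ t : ℕ, ∃ R Q : ℝ, 0 ≤ R ∧ 0 ≤ Q ∧ R ^ 2 ≤ ((t % m : ℕ) : ℝ) * Q ∧
      s t ≤ (1 + ((t % m : ℕ) : ℝ) / (2 * m)) * (5 / 4) * R ∧
      ∑ t ∈ Finset.range t, e t ^ 2 + ((m : ℝ) - ((t % m : ℕ) : ℝ)) / (2 * m) * Q
        ≤ 3 / 4 * ∑ t ∈ Finset.range t, r t ^ 2 := by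
    intro t
    induction t with
    | zero =>
      refine ⟨0, 0, le_rfl, le_rfl, by simp, ?_, by simp⟩
      rw [h0 0 (by simp)]; simp
    | succ t ih =>
      obtain ⟨R, Q, hR, hQ, hRQ, hsR, hsum⟩ := ih
      have hlt : t % m < m := Nat.mod_lt _ (by omega)
      have hltR : ((t % m : ℕ) : ℝ) + 1 ≤ m := by exact_mod_cast hlt
      have hj0 : (0 : ℝ) ≤ ((t % m : ℕ) : ℝ) := Nat.cast_nonneg _
      have hcase : ((t + 1) % m = 0) ∨ ((t + 1) % m = t % m + 1) := by
        rw [Nat.add_mod]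
        by_cases h : t % m + 1 < m
        · right
          have : 1 % m = 1 := Nat.mod_eq_of_lt (by omega)
          rw [this, Nat.mod_eq_of_lt h]
        · left
          have h2 : t % m + 1 = m := by omega
          rcases Nat.lt_or_ge 1 m with h1 | h1
          · rw [Nat.mod_eq_of_lt h1, h2, Nat.mod_self]
          · have : m = 1 := by omega
            subst this; simp [Nat.mod_one]
      obtain ⟨j, hj⟩ : ∃ j : ℝ, ((t % m : ℕ) : ℝ) = j := ⟨_, rfl⟩
      rw [hj] at hRQ hsR hsum hltR hj0
      have hes' := hes t
      have hrt := hr t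
      have het := he t
      have hst := hs t
      -- bound on e t ^ 2
      have hs2 : s t ≤ 2 * R := by
        have hq : j / (2 * m) ≤ 1 / 2 := by
          rw [div_le_div_iff₀ (by positivity) (by norm_num)]; linarith
        nlinarith
      have hs3 : s t ^ 2 ≤ 4 * (j * Q) := by nlinarith
      have he2 : 8 * (m : ℝ) ^ 2 * e t ^ 2 ≤ r t ^ 2 + s t ^ 2 := by
        have h1 : (4 * (m : ℝ) * e t) ^ 2 ≤ (r t + s t) ^ 2 := by gcongr
        nlinarith [sq_nonneg (r t - s t)]
      have he3 : e t ^ 2 ≤ r t ^ 2 / 8 + Q / (2 * m) := by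
        have h1 : 8 * (m : ℝ) ^ 2 * e t ^ 2 ≤ 8 * (m : ℝ) ^ 2 * (r t ^ 2 / 8 + Q / (2 * m)) := by
          have h2 : 8 * (m : ℝ) ^ 2 * (r t ^ 2 / 8 + Q / (2 * m))
              = (m : ℝ) ^ 2 * r t ^ 2 + 4 * (m * Q) := by
            field_simp; ring
          rw [h2]
          have h3 : j * Q ≤ m * Q := by gcongr; linarith
          have h4 : r t ^ 2 ≤ (m : ℝ) ^ 2 * r t ^ 2 := by
            apply le_mul_of_one_le_left (sq_nonneg _)
            nlinarith
          linarith
        exact le_of_mul_le_mul_left h1 (by positivity)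
      have hid : ((m : ℝ) - j) / (2 * m) * Q
          = ((m : ℝ) - (j + 1)) / (2 * m) * Q + Q / (2 * m) := by
        field_simp; ring
      have hpos : 0 ≤ ((m : ℝ) - (j + 1)) / (2 * m) :=
        div_nonneg (by linarith) (by positivity)
      have hle : ((m : ℝ) - (j + 1)) / (2 * m) ≤ 1 / 2 := by
        rw [div_le_div_iff₀ (by positivity) (by norm_num)]; linarith
      have hr2 := sq_nonneg (r t)
      have hQ' : 0 ≤ ((m : ℝ) - (j + 1)) / (2 * m) * Q := mul_nonneg hpos hQ
      rcases hcase with h | h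
      · refine ⟨0, 0, le_rfl, le_rfl, by simp, ?_, ?_⟩
        · rw [h0 _ h]; simp
        · rw [Finset.sum_range_succ, Finset.sum_range_succ]
          linarith
      · have hst1 := hstep t (by omega)
        rw [h]
        push_cast
        rw [hj]
        refine ⟨R + r t, Q + r t ^ 2, by positivity, by positivity, ?_, ?_, ?_⟩
        · have h1 : 2 * R * r t ≤ j * r t ^ 2 + Q := by
            rcases hj0.eq_or_lt with h5 | h5
            · rw [← h5] at hRQ
              have : R = 0 := by
                have : R ^ 2 = 0 := le_antisymm (by linarith) (sq_nonneg _)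
                exact pow_eq_zero_iff (two_ne_zero) |>.1 this
              rw [this, ← h5]; linarith
            · have h6 : j * (2 * R * r t) ≤ j * (j * r t ^ 2 + Q) := by
                nlinarith [sq_nonneg (R - j * r t)]
              exact le_of_mul_le_mul_left h6 h5
          nlinarith
        · have h7 : e t ≤ r t / (4 * m) + s t / (4 * m) := by
            rw [← add_div, le_div_iff₀ (by positivity)]; linarith
          have h8 : s (t + 1) ≤ (1 + 1 / (4 * m)) * s t + (1 + 1 / (4 * m)) * r t := by
            have : (1 + 1 / (4 * (m:ℝ))) * s t + (1 + 1 / (4 * m)) * r t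
              = s t + r t + (r t / (4 * m) + s t / (4 * m)) := by ring
            linarith
          have h9 : 1 / (4 * (m : ℝ)) ≤ 1 / 4 := by
            rw [div_le_div_iff₀ (by positivity) (by norm_num)]; linarith
          have h10 : (1 + 1 / (4 * (m : ℝ))) * (1 + j / (2 * m)) ≤ 1 + (j + 1) / (2 * m) := by
            have : 1 + (j + 1) / (2 * m) - (1 + 1 / (4 * (m : ℝ))) * (1 + j / (2 * m))
                = (2 * m - j) / (8 * (m : ℝ) ^ 2) := by
              field_simp; ring
            have h11 : 0 ≤ (2 * m - j) / (8 * (m : ℝ) ^ 2) :=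
              div_nonneg (by linarith) (by positivity)
            linarith
          have h12 : (1 + 1 / (4 * (m : ℝ))) * s t
              ≤ (1 + (j + 1) / (2 * m)) * (5 / 4) * R := by
            calc (1 + 1 / (4 * (m : ℝ))) * s t
                ≤ (1 + 1 / (4 * (m : ℝ))) * ((1 + j / (2 * m)) * (5 / 4) * R) := by gcongr
              _ = ((1 + 1 / (4 * (m : ℝ))) * (1 + j / (2 * m))) * (5 / 4 * R) := by ring
              _ ≤ (1 + (j + 1) / (2 * m)) * (5 / 4 * R) := by gcongr
              _ = _ := by ring
          have h13 : (1 + 1 / (4 * (m : ℝ))) * r t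
              ≤ (1 + (j + 1) / (2 * m)) * (5 / 4) * r t := by
            have : 0 ≤ (j + 1) / (2 * (m : ℝ)) := by positivity
            apply mul_le_mul_of_nonneg_right _ hrt
            linarith
          linarith
        · rw [Finset.sum_range_succ, Finset.sum_range_succ]
          nlinarith [mul_le_mul_of_nonneg_right hle hr2]
  obtain ⟨R, Q, hR, hQ, -, -, h⟩ := key T
  have hlt : ((T % m : ℕ) : ℝ) ≤ m := by exact_mod_cast (Nat.mod_lt T (by omega)).le
  have : 0 ≤ ((m : ℝ) - ((T % m : ℕ) : ℝ)) / (2 * m) * Q :=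
    mul_nonneg (div_nonneg (by linarith) (by positivity)) hQ
  linarith

/-- Under the LEN setup with a `μ`-strongly monotone operator, the averaged output
satisfies `μ ‖z_out − z*‖² ≤ M ‖z_0 − z*‖³ / T^{3/2}`. -/
theorem len_strongly_monotone_bound
    {E : Type*} [NormedAddCommGroup E] [InnerProductSpace ℝ E] [FiniteDimensional ℝ E]
    (F : E → E) (F' : E → E →L[ℝ] E) (L M μ : ℝ) (m : ℕ) (hm : 1 ≤ m)
    (hdiff : ∀ x : E, HasFDerivAt F (F' x) x)
    (hLip : ∀ x y : E, ‖F' x - F' y‖ ≤ L * ‖x - y‖)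
    (hμ : 0 < μ)
    (hmono : ∀ x y : E, μ * ‖x - y‖ ^ 2 ≤ ⟪F x - F y, x - y⟫)
    (hMpos : 0 < M) (hM : 4 * (m : ℝ) * L ≤ M)
    (z w : ℕ → E) (η : ℕ → ℝ)
    (hne : ∀ t, w t ≠ z t)
    (hnewton : ∀ t, F (z t) + F' (z (m * (t / m))) (w t - z t)
        + (M * ‖w t - z t‖) • (w t - z t) = 0)
    (hη : ∀ t, η t = 1 / (M * ‖z t - w t‖))
    (hupdate : ∀ t, z (t + 1) = z t - η t • F (w t))
    (zstar : E) (hstar : F zstar = 0)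
    (T : ℕ) (hT : 1 ≤ T)
    (zout : E)
    (hzout : zout = (∑ t ∈ Finset.range T, η t)⁻¹ • ∑ t ∈ Finset.range T, η t • w t) :
    μ * ‖zout - zstar‖ ^ 2 ≤ M * ‖z 0 - zstar‖ ^ 3 / (T : ℝ) ^ ((3 : ℝ) / 2) := by
  classical
  have hrpos : ∀ t, 0 < ‖z t - w t‖ := fun t => by
    rw [norm_pos_iff, sub_ne_zero]; exact (hne t).symm
  have hL : 0 ≤ L := by
    have h := (norm_nonneg _).trans (hLip (z 0) (w 0))
    exact nonneg_of_mul_nonneg_left h (hrpos 0)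
  have hm1 : (1 : ℝ) ≤ m := by exact_mod_cast hm
  have hηpos : ∀ t, 0 < η t := fun t => by
    rw [hη]; have := hrpos t; positivity
  have hηM : ∀ t, η t * (M * ‖z t - w t‖) = 1 := fun t => by
    have := hrpos t
    rw [hη]; field_simp
  -- the error identity
  have herr : ∀ t, z (t + 1) - w t
      = -(η t • (F (w t) - F (z t) - F' (z (m * (t / m))) (w t - z t))) := fun t => by
    have h1 : F (w t) - F (z t) - F' (z (m * (t / m))) (w t - z t)
        = F (w t) + (M * ‖z t - w t‖) • (w t - z t) := by
      have h2 := hnewton t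
      rw [norm_sub_rev (w t) (z t)] at h2
      have h3 : (M * ‖z t - w t‖) • (w t - z t)
          = -(F (z t) + F' (z (m * (t / m))) (w t - z t)) :=
        (neg_eq_of_add_eq_zero_right h2).symm
      rw [h3]; abel
    rw [h1, smul_add, smul_smul, hηM, hupdate, one_smul]; abel
  have hebound : ∀ t, 4 * (m : ℝ) * ‖z (t + 1) - w t‖
      ≤ ‖z t - w t‖ + ‖z t - z (m * (t / m))‖ := fun t => by
    set p := z (m * (t / m))
    have h1 : ‖F (w t) - F (z t) - F' p (w t - z t)‖
        ≤ (L * (‖z t - w t‖ + ‖z t - p‖)) * ‖w t - z t‖ := by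
      apply (convex_segment (z t) (w t)).norm_image_sub_le_of_norm_hasFDerivWithin_le'
        (f' := F') (fun x _ => (hdiff x).hasFDerivWithinAt) _
        (left_mem_segment ℝ _ _) (right_mem_segment ℝ _ _)
      intro x hx
      refine (hLip x p).trans (mul_le_mul_of_nonneg_left ?_ hL)
      have h2 : ‖x - z t‖ ≤ ‖z t - w t‖ := by
        rw [norm_sub_rev (z t)]
        exact norm_sub_le_of_mem_segment hx
      calc ‖x - p‖ = ‖(x - z t) + (z t - p)‖ := by congr 1; abel
        _ ≤ _ := norm_add_le _ _
        _ ≤ _ := by gcongr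
    rw [herr, norm_neg, norm_smul, Real.norm_of_nonneg (hηpos t).le]
    rw [norm_sub_rev (w t)] at h1
    have hr := hrpos t
    set r := ‖z t - w t‖
    set q := ‖z t - p‖ with hq
    have hq0 : 0 ≤ q := norm_nonneg _
    have h0 := (hηpos t).le
    calc 4 * (m : ℝ) * (η t * ‖F (w t) - F (z t) - F' p (w t - z t)‖)
        ≤ 4 * (m : ℝ) * (η t * ((L * (r + q)) * r)) := by gcongr
      _ = (4 * (m : ℝ) * L) * (η t * (r + q) * r) := by ring
      _ ≤ M * (η t * (r + q) * r) := by gcongr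
      _ = (η t * (M * r)) * (r + q) := by ring
      _ = r + q := by rw [hηM, one_mul]
  have hblock := len_block_sum m hm (fun t => ‖z t - w t‖) (fun t => ‖z (t + 1) - w t‖)
    (fun t => ‖z t - z (m * (t / m))‖) (fun _ => norm_nonneg _) (fun _ => norm_nonneg _)
    (fun _ => norm_nonneg _) (by
      intro t ht
      have : m * (t / m) = t := Nat.mul_div_cancel' (Nat.dvd_of_mod_eq_zero ht)
      simp [this]) (by
      intro t ht
      have h1 : (t + 1) / m = t / m := by
        rw [Nat.succ_div, if_neg, add_zero]
        exact fun hd => ht (Nat.mod_eq_zero_of_dvd hd)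
      simp only [h1]
      calc ‖z (t + 1) - z (m * (t / m))‖
          = ‖(z t - z (m * (t / m))) - (z t - w t) + (z (t + 1) - w t)‖ := by congr 1; abel
        _ ≤ _ := (norm_add_le _ _).trans (by gcongr; exact norm_sub_le _ _)) hebound T
  -- descent
  have hdesc : ∀ t, 2 * (η t * ⟪F (w t), w t - zstar⟫)
      = ‖z t - zstar‖ ^ 2 - ‖z (t + 1) - zstar‖ ^ 2 + ‖z (t + 1) - w t‖ ^ 2
        - ‖z t - w t‖ ^ 2 := fun t => by
    have h1 : z (t + 1) - zstar = (z t - w t) + (w t - zstar) - η t • F (w t) := by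
      rw [hupdate]; abel
    have h2 : z (t + 1) - w t = (z t - w t) - η t • F (w t) := by
      rw [hupdate]; abel
    have h3 : z t - zstar = (z t - w t) + (w t - zstar) := by abel
    rw [h1, h2, h3]
    generalize z t - w t = a
    generalize w t - zstar = b
    rw [norm_sub_sq_real, norm_sub_sq_real, inner_add_left, inner_smul_right, inner_smul_right,
      real_inner_comm b]
    ring
  have hsum : ∑ t ∈ Finset.range T, 2 * (η t * ⟪F (w t), w t - zstar⟫)
      + 1 / 4 * ∑ t ∈ Finset.range T, ‖z t - w t‖ ^ 2 ≤ ‖z 0 - zstar‖ ^ 2 := by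
    have h1 : ∑ t ∈ Finset.range T, (‖z t - zstar‖ ^ 2 - ‖z (t + 1) - zstar‖ ^ 2)
        = ‖z 0 - zstar‖ ^ 2 - ‖z T - zstar‖ ^ 2 :=
      Finset.sum_range_sub' (fun t => ‖z t - zstar‖ ^ 2) T
    have h2 := sq_nonneg ‖z T - zstar‖
    rw [Finset.sum_congr rfl (fun t _ => hdesc t), Finset.sum_sub_distrib,
      Finset.sum_add_distrib, h1]
    linarith
  have hmon : ∀ t, μ * ‖w t - zstar‖ ^ 2 ≤ ⟪F (w t), w t - zstar⟫ := fun t => by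
    have := hmono (w t) zstar
    rwa [hstar, sub_zero] at this
  set d := ‖z 0 - zstar‖ with hd
  have hd0 : 0 ≤ d := norm_nonneg _
  set H := ∑ t ∈ Finset.range T, η t with hH
  have hne' : (Finset.range T).Nonempty := Finset.nonempty_range_iff.2 (by omega)
  have hHpos : 0 < H := Finset.sum_pos (fun t _ => hηpos t) hne'
  set S := ∑ t ∈ Finset.range T, ‖z t - w t‖ ^ 2 with hS
  have hSpos : 0 < S := Finset.sum_pos (fun t _ => by have := hrpos t; positivity) hne'
  set A := ∑ t ∈ Finset.range T, η t * ‖w t - zstar‖ ^ 2 with hA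
  have hApos : 0 ≤ A := Finset.sum_nonneg (fun t _ => by have := hηpos t; positivity)
  have hAB : 2 * (μ * A) ≤ ∑ t ∈ Finset.range T, 2 * (η t * ⟪F (w t), w t - zstar⟫) := by
    rw [hA, Finset.mul_sum, Finset.mul_sum]
    refine Finset.sum_le_sum fun t _ => ?_
    have := mul_le_mul_of_nonneg_left (hmon t) (hηpos t).le
    nlinarith
  have hμA : 0 ≤ μ * A := by positivity
  have hS4 : S ≤ 4 * d ^ 2 := by linarith
  have hA2 : 2 * (μ * A) ≤ d ^ 2 := by linarith
  have hdpos : 0 < d := by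
    rcases hd0.eq_or_lt with h | h
    · rw [← h] at hS4; norm_num at hS4; linarith
    · exact h
  -- Jensen
  have hJ : H * ‖zout - zstar‖ ^ 2 ≤ A := by
    have h1 : H • (zout - zstar) = ∑ t ∈ Finset.range T, η t • (w t - zstar) := by
      rw [hzout, smul_sub, smul_smul, mul_inv_cancel₀ hHpos.ne', one_smul]
      simp only [smul_sub, Finset.sum_sub_distrib, ← Finset.sum_smul]
      rfl
    set v := zout - zstar
    have h2 : H * ‖v‖ ^ 2 = ∑ t ∈ Finset.range T, η t * ⟪w t - zstar, v⟫ := by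
      have : ⟪H • v, v⟫ = H * ‖v‖ ^ 2 := by
        rw [real_inner_smul_left, real_inner_self_eq_norm_sq]
      rw [← this, h1, sum_inner]
      simp only [real_inner_smul_left]
    have h3 : 2 * ∑ t ∈ Finset.range T, η t * ⟪w t - zstar, v⟫ ≤ A + H * ‖v‖ ^ 2 := by
      rw [hA, hH, Finset.sum_mul, ← Finset.sum_add_distrib, Finset.mul_sum]
      refine Finset.sum_le_sum fun t _ => ?_
      have h4 := real_inner_le_norm (w t - zstar) v
      have h5 : 2 * ⟪w t - zstar, v⟫ ≤ ‖w t - zstar‖ ^ 2 + ‖v‖ ^ 2 := by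
        nlinarith [sq_nonneg (‖w t - zstar‖ - ‖v‖)]
      have := mul_le_mul_of_nonneg_left h5 (hηpos t).le
      linarith
    linarith
  -- lower bound on H
  have hTpos : (0 : ℝ) < T := by exact_mod_cast hT
  set q := Real.sqrt T with hq
  have hqpos : 0 < q := Real.sqrt_pos.2 hTpos
  have hq2 : q ^ 2 = T := Real.sq_sqrt hTpos.le
  have hTpow : (T : ℝ) ^ ((3 : ℝ) / 2) = q ^ 3 := by
    rw [hq, Real.sqrt_eq_rpow, ← Real.rpow_natCast, ← Real.rpow_mul hTpos.le]
    norm_num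
  set a := 2 * d / q with ha
  have hapos : 0 < a := by positivity
  have hterm : ∀ t, 3 / (2 * a) - ‖z t - w t‖ ^ 2 / (2 * a ^ 3) ≤ M * η t := fun t => by
    have hr := hrpos t
    rw [hη]
    generalize ‖z t - w t‖ = r at *
    have h1 : M * (1 / (M * r)) - (3 / (2 * a) - r ^ 2 / (2 * a ^ 3))
        = (a - r) ^ 2 * (2 * a + r) / (2 * a ^ 3 * r) := by
      field_simp; ring
    have h2 : 0 ≤ (a - r) ^ 2 * (2 * a + r) / (2 * a ^ 3 * r) := by positivity
    linarith
  have hHlow : q ^ 3 / (2 * d) ≤ M * H := by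
    have h1 : T * (3 / (2 * a)) - S / (2 * a ^ 3) ≤ M * H := by
      rw [hH, Finset.mul_sum, hS, Finset.sum_div]
      have := Finset.sum_le_sum (s := Finset.range T) (fun t _ => hterm t)
      rw [Finset.sum_sub_distrib, Finset.sum_const, Finset.card_range, nsmul_eq_mul] at this
      exact this
    have h2 : S / (2 * a ^ 3) ≤ 4 * d ^ 2 / (2 * a ^ 3) := by gcongr
    have h3 : T * (3 / (2 * a)) - 4 * d ^ 2 / (2 * a ^ 3) = q ^ 3 / (2 * d) := by
      rw [← hq2, ha]; field_simp; ring
    linarith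
  rw [hTpow, le_div_iff₀ (by positivity)]
  set V := ‖zout - zstar‖ ^ 2
  have hV : 0 ≤ V := by positivity
  have h1 : q ^ 3 ≤ M * H * (2 * d) := by
    rwa [div_le_iff₀ (by positivity)] at hHlow
  calc μ * V * q ^ 3 ≤ μ * V * (M * H * (2 * d)) := by gcongr
    _ = M * d * (2 * (μ * (H * V))) := by ring
    _ ≤ M * d * (2 * (μ * A)) := by gcongr
    _ ≤ M * d * d ^ 2 := by gcongr
    _ = M * d ^ 3 := by ring
end
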